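/- Let N ≥ 3, α ∈ (0, N), and p > (N+α)/(N−2). On the standard lattice ℤ^N (Cayley graph of ℤ^N with generators ±e₁, …, ±e_N), there exists a function u ∈ D^{1,2}(ℤ^N) with u(x) > 0 for every x ∈ ℤ^N solving the Choquard equation Δu(x) + (I_α ∗ u^p)(x)·u(x)^{p−1} = 0 for all x ∈ ℤ^N, where (I_α ∗ f)(x) := ∑_{y∈ℤ^N, y≠x} |x−y|^{α−N} f(y) with |·| the Euclidean norm. -/

import Mathlib

open Filter Topology

noncomputable section

namespace ChoquardZ

/-- Euclidean distance on the lattice `ℤ^N`. -/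
def zDist (N : ℕ) (x y : Fin N → ℤ) : ℝ :=
  Real.sqrt (∑ i, ((x i - y i : ℤ) : ℝ) ^ 2)

/-- The discrete Riesz potential convolution
`(I_α ∗ f)(x) = ∑_{y ≠ x} |x − y|^{α − N} f(y)`. -/
def rieszConv (N : ℕ) (α : ℝ) (f : (Fin N → ℤ) → ℝ) (x : Fin N → ℤ) : ℝ :=
  ∑' y, if y = x then 0 else zDist N x y ^ (α - (N : ℝ)) * f y

/-- The graph Laplacian on `ℤ^N` (neighbors differ by `±eᵢ`). -/
def zLap (N : ℕ) (u : (Fin N → ℤ) → ℝ) (x : Fin N → ℤ) : ℝ :=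
  ∑ i, ((u (Function.update x i (x i + 1)) - u x) +
    (u (Function.update x i (x i - 1)) - u x))

/-- `|∇u(x)|₂² = ∑_{y ∼ x} (u(y) − u(x))²` on `ℤ^N`. -/
def zGradSq (N : ℕ) (u : (Fin N → ℤ) → ℝ) (x : Fin N → ℤ) : ℝ :=
  ∑ i, ((u (Function.update x i (x i + 1)) - u x) ^ 2 +
    (u (Function.update x i (x i - 1)) - u x) ^ 2)

/-- `u ∈ ℓ^q(ℤ^N)`. -/
def zMemlp (N : ℕ) (q : ℝ) (u : (Fin N → ℤ) → ℝ) : Prop :=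
  Summable fun x => |u x| ^ q

/-- `u ∈ D^{1,2}(ℤ^N) = {u ∈ ℓ^{2N/(N−2)}(ℤ^N) : ‖u‖_{D^{1,2}} < ∞}`. -/
def zMemD12 (N : ℕ) (u : (Fin N → ℤ) → ℝ) : Prop :=
  zMemlp N (2 * (N : ℝ) / ((N : ℝ) - 2)) u ∧ Summable (zGradSq N u)

/-! Maximise the Choquard energy `I(v) = ∑ₓ v(x)^p (K ∗ v^p)(x)` over finitely supported `v ≥ 0`
with Dirichlet energy `E(v) = 1`. Since `ℓ^q ⊆ ℓ^∞` on a lattice, the supremum `S` is finite for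
every supercritical `p`, by the Sobolev and Young inequalities, and `I(v)` is bounded by a positive
power of `max v`. Hence a maximising sequence, translated so that its maxima sit at the origin,
cannot vanish, and a subsequence converges pointwise to some `u ≥ 0` with `u 0 > 0`.

That `u` is a maximiser is not needed. Insert into the homogeneous inequality `I(w) ≤ S E(w)^p` the
maximising sequence with its value at a single site `x` replaced by `s ≥ 0`: both sides are explicit
in `s` and, up to the cancelling value of `I` along the sequence, pass to the pointwise limit. The
limiting function of `s` is minimal at `s = u x`, which is the Euler–Lagrange (in)equality at `x`.
So `u` is superharmonic, hence positive by the strong maximum principle, and a multiple of `u`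
solves the equation. -/

lemma hasFiniteSupport_rpow {ι : Type*} {u : ι → ℝ} (hu : u.HasFiniteSupport) {r : ℝ}
    (hr : r ≠ 0) : (fun x => u x ^ r).HasFiniteSupport :=
  hu.fun_comp (g := fun t : ℝ => t ^ r) (Real.zero_rpow hr)

lemma hasFiniteSupport_abs_rpow {ι : Type*} {u : ι → ℝ} (hu : u.HasFiniteSupport) {r : ℝ}
    (hr : r ≠ 0) : (fun x => |u x| ^ r).HasFiniteSupport :=
  hasFiniteSupport_rpow (hu.fun_comp abs_zero) hr

lemma hasFiniteSupport_fwdDiff {G E : Type*} [AddCommGroup G] [AddCommGroup E]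
    {u : G → E} (hu : u.HasFiniteSupport) (v : G) : (fwdDiff v u).HasFiniteSupport :=
  Function.HasFiniteSupport.sub (hu.fun_comp_of_injective (add_left_injective v)) hu

lemma update_add_eq_add_single {ι : Type*} [DecidableEq ι] (x : ι → ℤ) (i : ι) (c : ℤ) :
    Function.update x i (x i + c) = x + Pi.single i c := by
  ext j
  rcases eq_or_ne j i with rfl | hji <;> simp [*]

section Sobolev

lemma enorm_le_tsum_enorm_fwdDiff {E : Type*} [NormedAddCommGroup E] {h : ℤ → E}
    (hh : h.HasFiniteSupport) (a : ℤ) : ‖h a‖ₑ ≤ ∑' t, ‖fwdDiff 1 h t‖ₑ := by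
  have h_inj : Function.Injective fun n : ℕ => a + (n : ℤ) := fun m n hmn => by simpa using hmn
  obtain ⟨n, hn⟩ : ∃ n : ℕ, h (a + n) = 0 := by
    by_contra! h_ne
    exact Set.infinite_range_of_injective h_inj (hh.subset (Set.range_subset_iff.2 h_ne))
  have h_telescope : ∑ k ∈ Finset.range n, fwdDiff 1 h (a + k) = -h a := by
    have := Finset.sum_range_sub (fun k : ℕ => h (a + k)) n
    simpa [fwdDiff, hn, add_assoc] using this
  calc ‖h a‖ₑ = ‖∑ k ∈ Finset.range n, fwdDiff 1 h (a + k)‖ₑ := by rw [h_telescope, enorm_neg]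
    _ ≤ ∑ k ∈ Finset.range n, ‖fwdDiff 1 h (a + k)‖ₑ :=
      enorm_sum_le (Finset.range n) fun k => fwdDiff 1 h (a + k)
    _ ≤ ∑' k : ℕ, ‖fwdDiff 1 h (a + k)‖ₑ := ENNReal.sum_le_tsum _
    _ ≤ ∑' t, ‖fwdDiff 1 h t‖ₑ :=
      ENNReal.tsum_comp_le_tsum_of_injective h_inj fun t => ‖fwdDiff 1 h t‖ₑ

lemma measure_pi_count {ι : Type*} [Fintype ι] {α : Type*} [Countable α] [MeasurableSpace α]
    [MeasurableSingletonClass α] :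
    MeasureTheory.Measure.pi (fun _ : ι => (MeasureTheory.Measure.count : MeasureTheory.Measure α))
      = MeasureTheory.Measure.count :=
  MeasureTheory.Measure.ext_of_singleton fun x => by simp [MeasureTheory.Measure.pi_singleton]

variable {ι : Type*} [Fintype ι] [DecidableEq ι]

lemma enorm_le_tsum_update_sum_enorm_fwdDiff {E : Type*} [NormedAddCommGroup E]
    {g : (ι → ℤ) → E} (hg : g.HasFiniteSupport) (x : ι → ℤ) (i : ι) :
    ‖g x‖ₑ ≤ ∑' t, ∑ j, ‖fwdDiff (Pi.single j 1) g (Function.update x i t)‖ₑ := by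
  have h_line := enorm_le_tsum_enorm_fwdDiff
    (hg.fun_comp_of_injective (Function.update_injective x i)) (x i)
  rw [Function.update_eq_self] at h_line
  refine h_line.trans (ENNReal.tsum_le_tsum fun t => ?_)
  have h_step : fwdDiff 1 (fun t => g (Function.update x i t)) t
      = fwdDiff (Pi.single i 1) g (Function.update x i t) := by
    simp [fwdDiff, ← update_add_eq_add_single]
  rw [h_step]
  exact Finset.single_le_sum
    (f := fun j => ‖fwdDiff (Pi.single j 1) g (Function.update x i t)‖ₑ)
    (fun _ _ => zero_le) (Finset.mem_univ i)

/- The discrete Gagliardo–Nirenberg inequality: bound `g` on each of the `card ι` grid lines through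
a point and apply the Loomis–Whitney type inequality for the counting measure. -/
lemma tsum_enorm_rpow_le_sum_tsum_enorm_fwdDiff {E : Type*} [NormedAddCommGroup E]
    {g : (ι → ℤ) → E} (hg : g.HasFiniteSupport) {P : ℝ}
    (hP : Real.HolderConjugate (Fintype.card ι) P) :
    ∑' x, ‖g x‖ₑ ^ P ≤ (∑ i, ∑' x, ‖fwdDiff (Pi.single i 1) g x‖ₑ) ^ P := by
  have h_grid := MeasureTheory.lintegral_prod_lintegral_pow_le
    (μ := fun _ : ι => (MeasureTheory.Measure.count : MeasureTheory.Measure ℤ)) hP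
    (f := fun x => ∑ j, ‖fwdDiff (Pi.single j 1) g x‖ₑ) (measurable_of_countable _)
  simp only [measure_pi_count, MeasureTheory.lintegral_count] at h_grid
  rw [Summable.tsum_finsetSum fun _ _ => ENNReal.summable] at h_grid
  refine le_trans (ENNReal.tsum_le_tsum fun x => ?_) h_grid
  have h_card : (0 : ℝ) < Fintype.card ι - 1 := hP.sub_one_pos
  calc ‖g x‖ₑ ^ P = ∏ _i : ι, ‖g x‖ₑ ^ (1 / ((Fintype.card ι : ℝ) - 1)) := by
        rw [Finset.prod_const, Finset.card_univ, ← ENNReal.rpow_natCast, ← ENNReal.rpow_mul,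
          hP.conjugate_eq]
        congr 1
        ring
    _ ≤ _ := Finset.prod_le_prod' fun i _ => ENNReal.rpow_le_rpow
        (enorm_le_tsum_update_sum_enorm_fwdDiff hg x i) (by positivity)

lemma tsum_norm_rpow_le_sum_tsum_norm_fwdDiff {E : Type*} [NormedAddCommGroup E]
    {g : (ι → ℤ) → E} (hg : g.HasFiniteSupport) {P : ℝ}
    (hP : Real.HolderConjugate (Fintype.card ι) P) :
    ∑' x, ‖g x‖ ^ P ≤ (∑ i, ∑' x, ‖fwdDiff (Pi.single i 1) g x‖) ^ P := by
  have h_ne_top : ∀ i, ∑' x, ‖fwdDiff (Pi.single i 1) g x‖ₑ ≠ ⊤ := fun i =>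
    tsum_enorm_ne_top_iff_summable_nnnorm.2 <| summable_of_hasFiniteSupport <|
      (hasFiniteSupport_fwdDiff hg _).fun_comp nnnorm_zero
  have h_toReal := ENNReal.toReal_mono
    (ENNReal.rpow_ne_top_of_nonneg hP.symm.nonneg (ENNReal.sum_ne_top.2 fun i _ => h_ne_top i))
    (tsum_enorm_rpow_le_sum_tsum_enorm_fwdDiff hg hP)
  rw [← ENNReal.toReal_rpow, ENNReal.toReal_sum fun i _ => h_ne_top i,
    ENNReal.tsum_toReal_eq fun _ => ENNReal.rpow_ne_top_of_nonneg hP.symm.nonneg enorm_ne_top]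
    at h_toReal
  simpa only [ENNReal.tsum_toReal_eq (fun _ => enorm_ne_top), ← ENNReal.toReal_rpow,
    toReal_enorm] using h_toReal

lemma abs_rpow_sub_rpow_le {a b M γ : ℝ} (ha : a ∈ Set.Icc 0 M) (hb : b ∈ Set.Icc 0 M)
    (hγ : 1 ≤ γ) : |a ^ γ - b ^ γ| ≤ γ * M ^ (γ - 1) * |a - b| := by
  refine (convex_Icc 0 M).norm_image_sub_le_of_norm_hasDerivWithin_le
    (fun t _ => (Real.hasDerivAt_rpow_const (Or.inr hγ)).hasDerivWithinAt) (fun t ht => ?_) hb ha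
  have := Real.rpow_nonneg ht.1 (γ - 1)
  rw [Real.norm_of_nonneg (by positivity)]
  gcongr
  exacts [ht.1, ht.2]

lemma tsum_mul_le_sqrt_mul_sqrt {β : Type*} {f g : β → ℝ} (hf : Summable fun x => f x ^ 2)
    (hg : Summable fun x => g x ^ 2) :
    ∑' x, |f x| * |g x| ≤ √(∑' x, f x ^ 2) * √(∑' x, g x ^ 2) := by
  simpa [Real.sqrt_eq_rpow] using
    Real.inner_le_Lp_mul_Lq_tsum_of_nonneg
    Real.HolderConjugate.two_two (fun x => abs_nonneg (f x)) (fun x => abs_nonneg (g x))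
    (by simpa using hf) (by simpa using hg)

lemma tsum_comp_add_right {G M : Type*} [AddGroup G] [AddCommMonoid M] [TopologicalSpace M]
    (f : G → M) (v : G) : ∑' x, f (x + v) = ∑' x, f x :=
  (Equiv.addRight v).tsum_eq f

lemma hasFiniteSupport_max_abs_rpow {G : Type*} [AddCommGroup G] {u : G → ℝ}
    (hu : u.HasFiniteSupport) {s : ℝ} (hs : s ≠ 0) (v : G) :
    (fun x => max |u (x + v)| |u x| ^ s).HasFiniteSupport :=
  hasFiniteSupport_rpow (((hu.fun_comp_of_injective (add_left_injective v)).fun_comp abs_zero).max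
    (hu.fun_comp abs_zero)) hs

lemma tsum_max_abs_rpow_le {G : Type*} [AddCommGroup G] {u : G → ℝ} (hu : u.HasFiniteSupport)
    {s : ℝ} (hs : s ≠ 0) (v : G) :
    ∑' x, max |u (x + v)| |u x| ^ s ≤ 2 * ∑' x, |u x| ^ s := by
  have h_supp : (fun x => |u x| ^ s).HasFiniteSupport := hasFiniteSupport_abs_rpow hu hs
  have h_shift := h_supp.fun_comp_of_injective (add_left_injective v)
  calc ∑' x, max |u (x + v)| |u x| ^ s ≤ ∑' x, (|u (x + v)| ^ s + |u x| ^ s) := by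
        refine Summable.tsum_le_tsum (fun x => ?_)
          (summable_of_hasFiniteSupport (hasFiniteSupport_max_abs_rpow hu hs v))
          (summable_of_hasFiniteSupport (h_shift.add h_supp))
        rcases max_choice |u (x + v)| |u x| with h | h <;> rw [h] <;> simp [Real.rpow_nonneg]
    _ = ∑' x, |u (x + v)| ^ s + ∑' x, |u x| ^ s :=
        (summable_of_hasFiniteSupport h_shift).tsum_add (summable_of_hasFiniteSupport h_supp)
    _ = 2 * ∑' x, |u x| ^ s := by
        rw [tsum_comp_add_right (fun x => |u x| ^ s) v, two_mul]

lemma tsum_abs_fwdDiff_abs_rpow_le {G : Type*} [AddCommGroup G] {u : G → ℝ}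
    (hu : u.HasFiniteSupport) {γ : ℝ} (hγ : 1 < γ) (v : G) :
    ∑' x, |fwdDiff v (fun y => |u y| ^ γ) x| ≤
      γ * (√(2 * ∑' x, |u x| ^ (2 * (γ - 1))) * √(∑' x, fwdDiff v u x ^ 2)) := by
  have hγ' : 0 < γ - 1 := sub_pos.2 hγ
  set m : G → ℝ := fun x => max |u (x + v)| |u x| ^ (γ - 1)
  have hm_supp : m.HasFiniteSupport := hasFiniteSupport_max_abs_rpow hu hγ'.ne' v
  have hd_supp := hasFiniteSupport_fwdDiff hu v
  have hm_sq (x : G) : m x ^ 2 = max |u (x + v)| |u x| ^ (2 * (γ - 1)) := by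
    rw [mul_comm, Real.rpow_mul (by positivity), Real.rpow_two]
  have h_pointwise (x : G) :
      |fwdDiff v (fun y => |u y| ^ γ) x| ≤ γ * (|m x| * |fwdDiff v u x|) := by
    have h_max := abs_rpow_sub_rpow_le (γ := γ) (M := max |u (x + v)| |u x|)
      ⟨abs_nonneg (u (x + v)), le_max_left _ _⟩ ⟨abs_nonneg (u x), le_max_right _ _⟩ hγ.le
    refine h_max.trans ?_
    rw [abs_of_nonneg (show 0 ≤ m x by positivity), ← mul_assoc]
    exact mul_le_mul_of_nonneg_left (abs_abs_sub_abs_le _ _) (by positivity)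
  calc ∑' x, |fwdDiff v (fun y => |u y| ^ γ) x| ≤ ∑' x, γ * (|m x| * |fwdDiff v u x|) := by
        refine Summable.tsum_le_tsum h_pointwise (summable_of_hasFiniteSupport ?_)
          (summable_of_hasFiniteSupport ?_)
        · exact (hasFiniteSupport_fwdDiff (hasFiniteSupport_abs_rpow hu (by positivity)) v).fun_comp
            abs_zero
        · exact ((hm_supp.fun_comp abs_zero).mul_left _).mul_right _
    _ = γ * ∑' x, |m x| * |fwdDiff v u x| := tsum_mul_left
    _ ≤ γ * (√(∑' x, m x ^ 2) * √(∑' x, fwdDiff v u x ^ 2)) := by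
        gcongr
        exact tsum_mul_le_sqrt_mul_sqrt
          (summable_of_hasFiniteSupport (hm_supp.fun_comp (zero_pow two_ne_zero)))
          (summable_of_hasFiniteSupport (hd_supp.fun_comp (zero_pow two_ne_zero)))
    _ ≤ _ := by
        simp only [hm_sq]
        gcongr
        exact tsum_max_abs_rpow_le hu (by positivity) v

lemma le_rpow_of_le_sqrt_mul_rpow {A B P : ℝ} (hA : 0 ≤ A) (hB : 0 ≤ B) (hP : P < 2)
    (h : A ≤ (√A * B) ^ P) : A ≤ B ^ (2 * P / (2 - P)) := by
  rcases hA.eq_or_lt with rfl | hA_pos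
  · positivity
  have hP' : 0 < 2 - P := sub_pos.2 hP
  have h_absorb : A ^ ((2 - P) / 2) ≤ B ^ P := by
    have hAP : 0 < A ^ (P / 2) := Real.rpow_pos_of_pos hA_pos _
    refine le_of_mul_le_mul_right ?_ hAP
    calc A ^ ((2 - P) / 2) * A ^ (P / 2) = A := by
          rw [← Real.rpow_add hA_pos, show (2 - P) / 2 + P / 2 = 1 by ring, Real.rpow_one]
      _ ≤ (√A * B) ^ P := h
      _ = B ^ P * A ^ (P / 2) := by
          rw [Real.mul_rpow (Real.sqrt_nonneg A) hB, Real.sqrt_eq_rpow, ← Real.rpow_mul hA]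
          ring_nf
  calc A = (A ^ ((2 - P) / 2)) ^ (2 / (2 - P)) := by
        rw [← Real.rpow_mul hA, div_mul_div_cancel₀ two_ne_zero, div_self hP'.ne', Real.rpow_one]
    _ ≤ (B ^ P) ^ (2 / (2 - P)) := by gcongr
    _ = B ^ (2 * P / (2 - P)) := by
        rw [← Real.rpow_mul hB]
        ring_nf

/-- The Dirichlet energy of a function on `ℤ^N`: the sum of its squared increments over the edges
of the lattice, the edge `{x, x + eᵢ}` being counted once. -/
def dirichletEnergy {N : ℕ} (u : (Fin N → ℤ) → ℝ) : ℝ :=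
  ∑ i, ∑' x, fwdDiff (Pi.single i 1) u x ^ 2

/-- The critical Sobolev exponent `2* = 2N / (N - 2)` of `ℤ^N`. -/
def sobolevExponent (N : ℕ) : ℝ := 2 * (N : ℝ) / ((N : ℝ) - 2)

/-- An admissible (not optimal) constant in the Sobolev inequality on `ℤ^N`. -/
def sobolevConst (N : ℕ) : ℝ :=
  (N * (sobolevExponent N / 2 + 1) * √2) ^ sobolevExponent N

lemma sobolevExponent_pos {N : ℕ} (hN : 3 ≤ N) : 0 < sobolevExponent N := by
  have : (3 : ℝ) ≤ N := by exact_mod_cast hN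
  exact div_pos (by linarith) (by linarith)

lemma dirichletEnergy_nonneg {N : ℕ} (u : (Fin N → ℤ) → ℝ) : 0 ≤ dirichletEnergy u :=
  Finset.sum_nonneg fun _ _ => tsum_nonneg fun _ => sq_nonneg _

lemma tsum_fwdDiff_sq_le_dirichletEnergy {N : ℕ} (u : (Fin N → ℤ) → ℝ) (i : Fin N) :
    ∑' x, fwdDiff (Pi.single i 1) u x ^ 2 ≤ dirichletEnergy u :=
  Finset.single_le_sum (f := fun i => ∑' x, fwdDiff (Pi.single i 1) u x ^ 2)
    (fun _ _ => tsum_nonneg fun _ => sq_nonneg _) (Finset.mem_univ i)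

lemma sum_tsum_norm_fwdDiff_abs_rpow_le {N : ℕ} {u : (Fin N → ℤ) → ℝ} (hu : u.HasFiniteSupport)
    {γ : ℝ} (hγ : 1 < γ) :
    ∑ i : Fin N, ∑' x, ‖fwdDiff (Pi.single i 1) (fun y => |u y| ^ γ) x‖ ≤
      √(∑' x, |u x| ^ (2 * (γ - 1))) * (N * γ * √2 * √(dirichletEnergy u)) :=
  calc _ ≤ ∑ _i : Fin N, γ * (√(2 * ∑' x, |u x| ^ (2 * (γ - 1))) * √(dirichletEnergy u)) := by
        refine Finset.sum_le_sum fun i _ =>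
          (tsum_abs_fwdDiff_abs_rpow_le hu hγ (Pi.single i 1)).trans ?_
        gcongr
        exact tsum_fwdDiff_sq_le_dirichletEnergy u i
    _ = _ := by
        rw [Finset.sum_const, Finset.card_univ, Fintype.card_fin, nsmul_eq_mul,
          Real.sqrt_mul zero_le_two]
        ring

/- Apply Gagliardo–Nirenberg to `|u| ^ γ` with `γ = 2* / 2 + 1`, for which the Cauchy–Schwarz bound
on the increments again involves the `ℓ^{2*}` norm of `u`. -/
theorem tsum_abs_rpow_sobolevExponent_le {N : ℕ} (hN : 3 ≤ N) {u : (Fin N → ℤ) → ℝ}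
    (hu : u.HasFiniteSupport) :
    ∑' x, |u x| ^ sobolevExponent N ≤
      sobolevConst N * dirichletEnergy u ^ (sobolevExponent N / 2) := by
  have hN' : (3 : ℝ) ≤ N := by exact_mod_cast hN
  have hN2 : (N : ℝ) - 2 ≠ 0 := by linarith
  have hN1 : (N : ℝ) - 1 ≠ 0 := by linarith
  set q := sobolevExponent N with hq_def
  have hq : 0 < q := sobolevExponent_pos hN
  set γ := q / 2 + 1 with hγ
  set P := (N : ℝ) / (N - 1) with hP
  have h_conj : Real.HolderConjugate (Fintype.card (Fin N)) P := by
    rw [Fintype.card_fin]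
    exact Real.HolderConjugate.conjExponent (by linarith)
  have hγP : γ * P = q := by rw [hγ, hP, hq_def, sobolevExponent]; field_simp; ring
  have hPq : 2 * P / (2 - P) = q := by
    have : 2 - P = (N - 2) / (N - 1) := by rw [hP]; field_simp; ring
    rw [this, hP, hq_def, sobolevExponent]; field_simp
  set A := ∑' x, |u x| ^ q
  have hA : 0 ≤ A := tsum_nonneg fun x => by positivity
  set D := N * γ * √2 * √(dirichletEnergy u) with hD
  have h_increments : ∑ i : Fin N, ∑' x, ‖fwdDiff (Pi.single i 1) (fun y => |u y| ^ γ) x‖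
      ≤ √A * D := by
    have := sum_tsum_norm_fwdDiff_abs_rpow_le hu (γ := γ) (by linarith)
    rwa [show 2 * (γ - 1) = q by rw [hγ]; ring] at this
  have h_gagliardo : A ≤ (√A * D) ^ P := by
    have := tsum_norm_rpow_le_sum_tsum_norm_fwdDiff
      (hasFiniteSupport_abs_rpow hu (by positivity : γ ≠ 0)) h_conj
    simp only [Real.norm_of_nonneg (Real.rpow_nonneg (abs_nonneg _) γ),
      ← Real.rpow_mul (abs_nonneg _), hγP] at this
    exact this.trans (Real.rpow_le_rpow
      (Finset.sum_nonneg fun _ _ => tsum_nonneg fun _ => norm_nonneg _) h_increments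
      h_conj.symm.nonneg)
  have h_absorbed := le_rpow_of_le_sqrt_mul_rpow hA (by positivity) (by
    rw [hP, div_lt_iff₀ (by linarith)]; linarith) h_gagliardo
  rwa [hPq, hD, Real.mul_rpow (by positivity) (Real.sqrt_nonneg _),
    Real.sqrt_eq_rpow (dirichletEnergy u), ← Real.rpow_mul (dirichletEnergy_nonneg u),
    one_div_mul_eq_div] at h_absorbed

end Sobolev

section Energy

variable {N : ℕ}

lemma zLap_eq_sum (u : (Fin N → ℤ) → ℝ) (x : Fin N → ℤ) :
    zLap N u x =
      ∑ i, ((u (x + Pi.single i 1) - u x) + (u (x - Pi.single i 1) - u x)) := by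
  simp only [zLap, sub_eq_add_neg (x _), sub_eq_add_neg x, update_add_eq_add_single,
    Pi.single_neg]

lemma zGradSq_eq_sum (u : (Fin N → ℤ) → ℝ) (x : Fin N → ℤ) :
    zGradSq N u x =
      ∑ i, (fwdDiff (Pi.single i 1) u x ^ 2 +
        fwdDiff (Pi.single i 1) u (x - Pi.single i 1) ^ 2) := by
  refine Finset.sum_congr rfl fun i _ => ?_
  rw [sub_eq_add_neg (x i), update_add_eq_add_single, update_add_eq_add_single, Pi.single_neg,
    ← sub_eq_add_neg, sub_sq_comm (u (x - _)), fwdDiff, fwdDiff, sub_add_cancel]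

lemma summable_fwdDiff_sq {G : Type*} [AddCommGroup G] {u : G → ℝ} (hu : u.HasFiniteSupport)
    (v : G) : Summable fun x => fwdDiff v u x ^ 2 :=
  summable_of_hasFiniteSupport
    ((hasFiniteSupport_fwdDiff hu v).fun_comp (g := fun t : ℝ => t ^ 2) (by simp))

lemma sum_comp_sub_right_le_tsum {G : Type*} [AddCommGroup G] {f : G → ℝ} (hf : Summable f)
    (hf_nonneg : ∀ x, 0 ≤ f x) (v : G) (s : Finset G) : ∑ x ∈ s, f (x - v) ≤ ∑' x, f x := by
  rw [← (Equiv.subRight v).tsum_eq f]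
  exact ((Equiv.subRight v).summable_iff.2 hf).sum_le_tsum s fun x _ => hf_nonneg _

lemma sum_zGradSq_le {u : (Fin N → ℤ) → ℝ} (hu : u.HasFiniteSupport) (s : Finset (Fin N → ℤ)) :
    ∑ x ∈ s, zGradSq N u x ≤ 2 * dirichletEnergy u := by
  simp only [zGradSq_eq_sum]
  rw [Finset.sum_comm, dirichletEnergy, Finset.mul_sum]
  refine Finset.sum_le_sum fun i _ => ?_
  rw [Finset.sum_add_distrib, two_mul]
  have h_sum := summable_fwdDiff_sq hu (Pi.single i 1)
  exact add_le_add (h_sum.sum_le_tsum s fun _ _ => sq_nonneg _)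
    (sum_comp_sub_right_le_tsum h_sum (fun _ => sq_nonneg _) _ s)

lemma dirichletEnergy_const_mul (c : ℝ) (u : (Fin N → ℤ) → ℝ) :
    dirichletEnergy (fun x => c * u x) = c ^ 2 * dirichletEnergy u := by
  simp only [dirichletEnergy, fwdDiff, ← mul_sub, mul_pow, tsum_mul_left, Finset.mul_sum]

lemma dirichletEnergy_comp_add_right (u : (Fin N → ℤ) → ℝ) (v : Fin N → ℤ) :
    dirichletEnergy (fun x => u (x + v)) = dirichletEnergy u := by
  refine Finset.sum_congr rfl fun i _ => ?_
  rw [← tsum_comp_add_right (fun x => fwdDiff (Pi.single i 1) u x ^ 2) v]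
  simp only [fwdDiff, add_right_comm]

lemma hasSum_fwdDiff_mul_fwdDiff_single {G : Type*} [AddCommGroup G] [DecidableEq G] (u : G → ℝ)
    (v x : G) : HasSum (fun y => fwdDiff v u y * fwdDiff v (Pi.single x 1) y)
      (-((u (x + v) - u x) + (u (x - v) - u x))) := by
  have h_shift := hasSum_single (f := fun y => fwdDiff v u y * (Pi.single x 1 : G → ℝ) (y + v))
    (x - v) fun y hy => by simp [← eq_sub_iff_add_eq, hy]
  have h_here := hasSum_single (f := fun y => fwdDiff v u y * (Pi.single x 1 : G → ℝ) y)
    x fun y hy => by simp [hy]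
  have h_value : -((u (x + v) - u x) + (u (x - v) - u x)) =
      fwdDiff v u (x - v) * (Pi.single x 1 : G → ℝ) (x - v + v)
        - fwdDiff v u x * (Pi.single x 1 : G → ℝ) x := by
    simp only [fwdDiff, sub_add_cancel, Pi.single_eq_same]
    ring
  rw [h_value]
  exact (h_shift.sub h_here).congr_fun fun y => mul_sub _ _ _

lemma update_eq_add_smul_single {G : Type*} [DecidableEq G] (u : G → ℝ) (x : G) (s : ℝ) :
    Function.update u x s = u + (s - u x) • Pi.single x 1 := by
  ext y
  rcases eq_or_ne y x with rfl | hy <;> simp [*]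

lemma dirichletEnergy_update {u : (Fin N → ℤ) → ℝ} (hu : u.HasFiniteSupport) (x : Fin N → ℤ)
    (s : ℝ) :
    dirichletEnergy (Function.update u x s) =
      dirichletEnergy u - 2 * (s - u x) * zLap N u x
        + (s - u x) ^ 2 * dirichletEnergy (Pi.single x 1 : (Fin N → ℤ) → ℝ) := by
  simp only [zLap_eq_sum, dirichletEnergy, Finset.mul_sum, ← Finset.sum_sub_distrib,
    ← Finset.sum_add_distrib]
  refine Finset.sum_congr rfl fun i _ => ?_
  have h_single : (Pi.single x 1 : (Fin N → ℤ) → ℝ).HasFiniteSupport :=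
    (Set.toFinite {x}).subset Pi.support_single_subset
  have h_expand := (((summable_fwdDiff_sq hu (Pi.single i 1)).hasSum.add
    ((hasSum_fwdDiff_mul_fwdDiff_single u (Pi.single i 1) x).mul_left (2 * (s - u x)))).add
    ((summable_fwdDiff_sq h_single (Pi.single i 1)).hasSum.mul_left ((s - u x) ^ 2)))
  convert h_expand.tsum_eq using 3
  · rw [update_eq_add_smul_single, fwdDiff_add, fwdDiff_const_smul]
    simp only [Pi.add_apply, Pi.smul_apply, smul_eq_mul]
    ring
  · ring

variable {u : (Fin N → ℤ) → ℝ}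

lemma summable_abs_rpow_sobolevExponent (hN : 3 ≤ N) (hu : u.HasFiniteSupport) :
    Summable fun x => |u x| ^ sobolevExponent N :=
  summable_of_hasFiniteSupport (hasFiniteSupport_abs_rpow hu (sobolevExponent_pos hN).ne')

lemma dirichletEnergy_eq_zero_iff (hN : 3 ≤ N) (hu : u.HasFiniteSupport) :
    dirichletEnergy u = 0 ↔ u = 0 := by
  refine ⟨fun h => funext fun x => ?_, fun h => by simp [h, dirichletEnergy, fwdDiff]⟩
  have hq := sobolevExponent_pos hN
  have h_sobolev := tsum_abs_rpow_sobolevExponent_le hN hu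
  rw [h, Real.zero_rpow (by positivity), mul_zero] at h_sobolev
  have h_le : |u x| ^ sobolevExponent N ≤ 0 :=
    ((summable_abs_rpow_sobolevExponent hN hu).le_tsum x fun y _ => by positivity).trans h_sobolev
  simpa [Real.rpow_eq_zero (abs_nonneg _) hq.ne'] using h_le.antisymm (by positivity)

lemma tsum_abs_rpow_sobolevExponent_le_sobolevConst (hN : 3 ≤ N) (hu : u.HasFiniteSupport)
    (hE : dirichletEnergy u = 1) : ∑' x, |u x| ^ sobolevExponent N ≤ sobolevConst N := by
  simpa [hE] using tsum_abs_rpow_sobolevExponent_le hN hu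

end Energy

section Convolution

variable {G : Type*} [AddCommGroup G]

/-- The convolution `K ∗ f` of a kernel `K` with a function `f` on an abelian group. -/
def convolve (K f : G → ℝ) (x : G) : ℝ := ∑' y, K (x - y) * f y

/-- The interaction energy `∑ₓ f x (K ∗ f) x`, the double sum of `f x K (x - y) f y`. -/
def interactionEnergy (K f : G → ℝ) : ℝ := ∑' x, f x * convolve K f x

variable {K f g : G → ℝ}

lemma convolve_nonneg (hK : ∀ z, 0 ≤ K z) (hf : ∀ x, 0 ≤ f x) (x : G) : 0 ≤ convolve K f x :=
  tsum_nonneg fun y => mul_nonneg (hK _) (hf y)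

lemma summable_convolve (K : G → ℝ) (hf : f.HasFiniteSupport) (x : G) :
    Summable fun y => K (x - y) * f y :=
  summable_of_hasFiniteSupport (hf.mul_right fun y => K (x - y))

lemma summable_mul_convolve (K : G → ℝ) (hf : f.HasFiniteSupport) :
    Summable fun x => f x * convolve K f x :=
  summable_of_hasFiniteSupport (hf.mul_left (convolve K f))

lemma convolve_mono (hK : ∀ z, 0 ≤ K z) (hf : f.HasFiniteSupport) (hg : g.HasFiniteSupport)
    (hfg : ∀ x, f x ≤ g x) (x : G) : convolve K f x ≤ convolve K g x :=
  (summable_convolve K hf x).tsum_le_tsum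
    (fun y => mul_le_mul_of_nonneg_left (hfg y) (hK _)) (summable_convolve K hg x)

lemma interactionEnergy_mono (hK : ∀ z, 0 ≤ K z) (hf_nonneg : ∀ x, 0 ≤ f x)
    (hf : f.HasFiniteSupport) (hg : g.HasFiniteSupport) (hfg : ∀ x, f x ≤ g x) :
    interactionEnergy K f ≤ interactionEnergy K g :=
  (summable_mul_convolve K hf).tsum_le_tsum (fun x => mul_le_mul (hfg x)
    (convolve_mono hK hf hg hfg x) (convolve_nonneg hK hf_nonneg x) ((hf_nonneg x).trans (hfg x)))
    (summable_mul_convolve K hg)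

lemma mul_mul_le_interactionEnergy (hK : ∀ z, 0 ≤ K z) (hf_nonneg : ∀ x, 0 ≤ f x)
    (hf : f.HasFiniteSupport) (x y : G) : f x * (K (x - y) * f y) ≤ interactionEnergy K f :=
  calc f x * (K (x - y) * f y) ≤ f x * convolve K f x :=
        mul_le_mul_of_nonneg_left ((summable_convolve K hf x).le_tsum y
          fun z _ => mul_nonneg (hK _) (hf_nonneg z)) (hf_nonneg x)
    _ ≤ interactionEnergy K f := (summable_mul_convolve K hf).le_tsum x
        fun z _ => mul_nonneg (hf_nonneg z) (convolve_nonneg hK hf_nonneg z)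

lemma convolve_const_mul (K : G → ℝ) (c : ℝ) (f : G → ℝ) (x : G) :
    convolve K (fun y => c * f y) x = c * convolve K f x := by
  simp only [convolve, mul_left_comm _ c, tsum_mul_left]

lemma interactionEnergy_const_mul (K : G → ℝ) (c : ℝ) (f : G → ℝ) :
    interactionEnergy K (fun y => c * f y) = c ^ 2 * interactionEnergy K f := by
  simp only [interactionEnergy, convolve_const_mul, ← tsum_mul_left]
  exact tsum_congr fun x => by ring

lemma convolve_comp_add_right (K f : G → ℝ) (v x : G) :
    convolve K (fun y => f (y + v)) x = convolve K f (x + v) := by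
  rw [convolve, convolve, ← tsum_comp_add_right (fun y => K (x + v - y) * f y) v]
  simp only [add_sub_add_right_eq_sub]

lemma interactionEnergy_comp_add_right (K f : G → ℝ) (v : G) :
    interactionEnergy K (fun y => f (y + v)) = interactionEnergy K f := by
  simp only [interactionEnergy, convolve_comp_add_right]
  exact tsum_comp_add_right (fun x => f x * convolve K f x) v

lemma hasSum_convolve (hK : Summable K) (hf : f.HasFiniteSupport) :
    HasSum (convolve K f) ((∑' z, K z) * ∑' y, f y) := by
  obtain ⟨S, hS⟩ : ∃ S : Finset G, ∀ y ∉ S, f y = 0 :=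
    ⟨(show f.support.Finite from hf).toFinset, fun y hy => by simpa using hy⟩
  have h_convolve (x : G) : convolve K f x = ∑ y ∈ S, K (x - y) * f y :=
    tsum_eq_sum fun y hy => by rw [hS y hy, mul_zero]
  rw [tsum_eq_sum hS, Finset.mul_sum]
  refine (hasSum_sum fun y _ => ?_).congr_fun h_convolve
  exact ((Equiv.subRight y).hasSum_iff.2 hK.hasSum).mul_right (f y)

variable [DecidableEq G]

lemma convolve_update (K : G → ℝ) (hf : f.HasFiniteSupport) (x : G) (s : ℝ) (z : G) :
    convolve K (Function.update f x s) z = convolve K f z + (s - f x) * K (z - x) := by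
  have h_single := hasSum_single (f := fun y => K (z - y) * (Pi.single x 1 : G → ℝ) y) x
    fun y hy => by simp [hy]
  have h_add := (summable_convolve K hf z).hasSum.add (h_single.mul_left (s - f x))
  simp only [Pi.single_eq_same, mul_one] at h_add
  refine (h_add.congr_fun fun y => ?_).tsum_eq
  simp only [update_eq_add_smul_single, Pi.add_apply, Pi.smul_apply, smul_eq_mul]
  ring

lemma interactionEnergy_update (hK : K.Even) (hf : f.HasFiniteSupport) (x : G) (s : ℝ) :
    interactionEnergy K (Function.update f x s) =
      interactionEnergy K f + 2 * (s - f x) * convolve K f x + (s - f x) ^ 2 * K 0 := by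
  have h_cross : HasSum (fun z => f z * K (z - x)) (convolve K f x) :=
    (summable_convolve K hf x).hasSum.congr_fun fun z => by rw [← hK (z - x), neg_sub, mul_comm]
  have h_single := hasSum_single (f := fun z => (Pi.single x 1 : G → ℝ) z *
    (convolve K f z + (s - f x) * K (z - x))) x fun z hz => by simp [hz]
  simp only [Pi.single_eq_same, one_mul, sub_self] at h_single
  have h_add := ((summable_mul_convolve K hf).hasSum.add (h_cross.mul_left (s - f x))).add
    (h_single.mul_left (s - f x))
  rw [show ∀ a b k : ℝ, a + 2 * (s - f x) * b + (s - f x) ^ 2 * k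
    = a + (s - f x) * b + (s - f x) * (b + (s - f x) * k) by intros; ring]
  refine (h_add.congr_fun fun z => ?_).tsum_eq
  rw [convolve_update K hf, update_eq_add_smul_single, Pi.add_apply, Pi.smul_apply, smul_eq_mul]
  ring

end Convolution

section Young

lemma sqrt_mul_rpow_le {k a r : ℝ} (hk : 0 ≤ k) (ha : 0 ≤ a) (hr : 1 ≤ r) :
    √k * a ^ (1 - (2 * r)⁻¹) ≤ k ^ r + a := by
  have hθ : 0 ≤ (2 * r)⁻¹ := by positivity
  have hθ' : (2 * r)⁻¹ ≤ 1 := inv_le_one_of_one_le₀ (by linarith)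
  have h_sqrt : √k = (k ^ r) ^ (2 * r)⁻¹ := by
    rw [Real.sqrt_eq_rpow, ← Real.rpow_mul hk]
    congr 1
    field_simp
  rw [h_sqrt]
  refine (Real.geom_mean_le_arith_mean2_weighted hθ (sub_nonneg.2 hθ') (Real.rpow_nonneg hk r) ha
    (add_sub_cancel _ _)).trans (add_le_add ?_ ?_)
  · exact mul_le_of_le_one_left (by positivity) hθ'
  · exact mul_le_of_le_one_left ha (sub_le_self 1 hθ)

lemma mul_rpow_mul_rpow_le {k a b r : ℝ} (hk : 0 ≤ k) (ha : 0 ≤ a) (hb : 0 ≤ b) (hr : 1 ≤ r) :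
    k * (a ^ (1 - (2 * r)⁻¹) * b ^ (1 - (2 * r)⁻¹)) ≤ (k ^ r * a + k ^ r * b) / 2 + a * b := by
  set θ := (2 * r)⁻¹ with hθ_def
  have hθ : 0 ≤ θ := by positivity
  have hθ' : θ ≤ 1 / 2 := by
    rw [hθ_def, mul_inv]
    linarith [inv_le_one_of_one_le₀ hr]
  have h_split {c : ℝ} (hc : 0 ≤ c) : c ^ (1 - θ) = c ^ θ * c ^ (1 - 2 * θ) := by
    rw [← Real.rpow_add_of_nonneg hc hθ (by linarith)]
    ring_nf
  have h_kernel : k = (k ^ r) ^ θ * (k ^ r) ^ θ := by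
    rw [← Real.rpow_add_of_nonneg (by positivity) hθ hθ, ← Real.rpow_mul hk, hθ_def,
      show r * ((2 * r)⁻¹ + (2 * r)⁻¹) = 1 by field_simp; ring, Real.rpow_one]
  have hkr := Real.rpow_nonneg hk r
  calc k * (a ^ (1 - θ) * b ^ (1 - θ))
      = (k ^ r * a) ^ θ * (k ^ r * b) ^ θ * (a * b) ^ (1 - 2 * θ) := by
        rw [h_split ha, h_split hb, Real.mul_rpow hkr ha, Real.mul_rpow hkr hb,
          Real.mul_rpow ha hb]
        nth_rewrite 1 [h_kernel]
        ring
    _ ≤ θ * (k ^ r * a) + θ * (k ^ r * b) + (1 - 2 * θ) * (a * b) :=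
        Real.geom_mean_le_arith_mean3_weighted hθ hθ (by linarith) (by positivity) (by positivity)
          (by positivity) (by ring)
    _ ≤ 1 / 2 * (k ^ r * a) + 1 / 2 * (k ^ r * b) + 1 * (a * b) := by
        gcongr
        linarith
    _ = (k ^ r * a + k ^ r * b) / 2 + a * b := by ring

variable {G : Type*} [AddCommGroup G]

lemma interactionEnergy_rpow_le {K f : G → ℝ} {r : ℝ} (hr : 1 ≤ r) (hK : ∀ z, 0 ≤ K z)
    (hKr : Summable fun z => K z ^ r) (hf_nonneg : ∀ x, 0 ≤ f x) (hf : f.HasFiniteSupport) :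
    interactionEnergy K (fun x => f x ^ (1 - (2 * r)⁻¹)) ≤
      (∑' x, f x) * (∑' z, K z ^ r + ∑' x, f x) := by
  set A := ∑' x, f x
  set κ := ∑' z, K z ^ r
  have hθ : 1 - (2 * r)⁻¹ ≠ 0 := (sub_pos.2 (inv_lt_one_of_one_lt₀ (by linarith))).ne'
  have h_supp : (fun x => f x ^ (1 - (2 * r)⁻¹)).HasFiniteSupport :=
    hasFiniteSupport_rpow hf hθ
  have hf_sum : HasSum f A := (summable_of_hasFiniteSupport hf).hasSum
  have hκ (x : G) : HasSum (fun y => K (x - y) ^ r) κ :=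
    ((Equiv.subLeft x).hasSum_iff (f := fun z => K z ^ r)).2 hKr.hasSum
  have h_conv (x : G) : HasSum (fun y => K (x - y) ^ r * f y) (convolve (fun z => K z ^ r) f x) :=
    (summable_convolve (fun z => K z ^ r) hf x).hasSum
  have h_row (x : G) : f x ^ (1 - (2 * r)⁻¹) * convolve K (fun y => f y ^ (1 - (2 * r)⁻¹)) x ≤
      (κ * f x + convolve (fun z => K z ^ r) f x) / 2 + f x * A := by
    rw [convolve, ← tsum_mul_left]
    have h_bound : HasSum (fun y => (K (x - y) ^ r * f x + K (x - y) ^ r * f y) / 2 + f x * f y)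
        ((κ * f x + convolve (fun z => K z ^ r) f x) / 2 + f x * A) :=
      ((((hκ x).mul_right (f x)).add (h_conv x)).div_const 2).add (hf_sum.mul_left (f x))
    refine hasSum_le (fun y => ?_) ((summable_convolve K h_supp x).mul_left _).hasSum h_bound
    rw [mul_left_comm]
    exact mul_rpow_mul_rpow_le (hK _) (hf_nonneg x) (hf_nonneg y) hr
  refine (hasSum_le h_row (summable_mul_convolve K h_supp).hasSum
    ((((hf_sum.mul_left κ).add (hasSum_convolve hKr hf)).div_const 2).add
      (hf_sum.mul_right A))).trans_eq ?_
  ring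

end Young

section PointwiseLimits

variable {ι : Type*} {w : ℕ → ι → ℝ} {w' : ι → ℝ} {B : ℝ}

lemma summable_of_tendsto_of_sum_le (hw_nonneg : ∀ n x, 0 ≤ w n x)
    (hw_lim : ∀ x, Tendsto (fun n => w n x) atTop (𝓝 (w' x)))
    (hB : ∀ n (s : Finset ι), ∑ x ∈ s, w n x ≤ B) : Summable w' :=
  summable_of_sum_le (fun x => ge_of_tendsto' (hw_lim x) fun n => hw_nonneg n x)
    fun s => le_of_tendsto' (tendsto_finsetSum s fun x _ => hw_lim x) fun n => hB n s

lemma summable_mul_of_tendsto_cofinite {c f : ι → ℝ} (hc : Tendsto c cofinite (𝓝 0))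
    (hf : Summable fun x => |f x|) : Summable fun x => c x * f x :=
  (Summable.mul_tendsto_const (f := f) hf hc).congr fun _ => mul_comm _ _

lemma abs_tsum_sub_sum_le {c f : ι → ℝ} {ε : ℝ} {s : Finset ι} (hε : 0 ≤ ε)
    (hc : ∀ x ∉ s, |c x| ≤ ε) (hcf : Summable fun x => c x * f x)
    (hf : Summable fun x => |f x|) :
    |∑' x, c x * f x - ∑ x ∈ s, c x * f x| ≤ ε * ∑' x, |f x| := by
  rw [← hcf.sum_add_tsum_subtype_compl s, add_sub_cancel_left]
  have h_tail := (hf.subtype fun x => x ∉ s).mul_left ε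
  calc |∑' x : {x // x ∉ s}, c x * f x| ≤ ∑' x : {x // x ∉ s}, ε * |f x| :=
        tsum_of_norm_bounded h_tail.hasSum fun x => by
          rw [Real.norm_eq_abs, abs_mul]
          exact mul_le_mul_of_nonneg_right (hc x x.2) (abs_nonneg _)
    _ ≤ ε * ∑' x, |f x| := by
        rw [tsum_mul_left]
        gcongr
        exact hf.tsum_subtype_le _ _ fun x => abs_nonneg _

lemma tendsto_tsum_mul_of_tendsto_cofinite {c : ι → ℝ} (hc : Tendsto c cofinite (𝓝 0))
    (hw_lim : ∀ x, Tendsto (fun n => w n x) atTop (𝓝 (w' x)))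
    (hB : ∀ n (s : Finset ι), ∑ x ∈ s, |w n x| ≤ B) :
    Tendsto (fun n => ∑' x, c x * w n x) atTop (𝓝 (∑' x, c x * w' x)) := by
  have hw (n : ℕ) : Summable fun x => |w n x| := summable_of_sum_le (fun x => abs_nonneg _) (hB n)
  have hw' : Summable fun x => |w' x| :=
    summable_of_tendsto_of_sum_le (fun n x => abs_nonneg (w n x)) (fun x => (hw_lim x).abs) hB
  have h_unif : TendstoUniformlyOnFilter (fun (s : Finset ι) n => ∑ x ∈ s, c x * w n x)
      (fun n => ∑' x, c x * w n x) atTop atTop := by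
    refine (Metric.tendstoUniformly_iff.2 fun ε hε => ?_).tendstoUniformlyOnFilter.mono_right le_top
    obtain ⟨δ, hδ, hδB⟩ := exists_pos_mul_lt hε B
    have h_large : {x | ¬ |c x| ≤ δ}.Finite :=
      hc.abs.eventually (ge_mem_nhds (by simpa using hδ))
    filter_upwards [eventually_ge_atTop h_large.toFinset] with s hs n
    rw [Real.dist_eq]
    refine (abs_tsum_sub_sum_le hδ.le (fun x hx => ?_)
      (summable_mul_of_tendsto_cofinite hc (hw n)) (hw n)).trans_lt ?_
    · by_contra h
      exact hx (hs (h_large.mem_toFinset.2 h))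
    · calc δ * ∑' x, |w n x| ≤ δ * B := by gcongr; exact (hw n).tsum_le_of_sum_le (hB n)
        _ < ε := by rwa [mul_comm]
  exact h_unif.tendsto_of_eventually_tendsto
    (Eventually.of_forall fun s => tendsto_finsetSum s fun x _ => (hw_lim x).const_mul (c x))
    (summable_mul_of_tendsto_cofinite hc hw').hasSum

end PointwiseLimits

section Supercritical

variable {G : Type*} [AddCommGroup G]

/-- Admissible interaction kernels: nonnegative, even and nonzero kernels in `ℓ^r`, `1 ≤ r`. The
lattice Riesz kernel `|z|^(α - N)` is one whenever `N < r (N - α)`. -/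
structure IsInteractionKernel (K : G → ℝ) (r : ℝ) : Prop where
  nonneg : ∀ z, 0 ≤ K z
  even : K.Even
  exists_pos : ∃ z, 0 < K z
  one_le : 1 ≤ r
  summable_rpow : Summable fun z => K z ^ r

lemma rpow_le_rpow_sub_mul_rpow {t M p q τ : ℝ} (ht : 0 ≤ t) (htM : t ≤ M) (hqτ : 0 ≤ q * τ)
    (hp : q * τ ≤ p) : t ^ p ≤ M ^ (p - q * τ) * (t ^ q) ^ τ := by
  rw [← Real.rpow_mul ht]
  calc t ^ p = t ^ (p - q * τ) * t ^ (q * τ) := by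
        rw [← Real.rpow_add_of_nonneg ht (sub_nonneg.2 hp) hqτ, sub_add_cancel]
    _ ≤ M ^ (p - q * τ) * t ^ (q * τ) := by
        gcongr

lemma one_sub_inv_two_mul_pos {r : ℝ} (hr : 1 ≤ r) : 0 < 1 - (2 * r)⁻¹ :=
  sub_pos.2 (inv_lt_one_of_one_lt₀ (by linarith))

/-- The upper critical exponent for kernels in `ℓ^r`; it is `(N + α) / (N - 2)` for the borderline
`r = N / (N - α)` of the Riesz kernel. -/
def criticalExponent (N : ℕ) (r : ℝ) : ℝ := sobolevExponent N * (1 - (2 * r)⁻¹)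

lemma one_lt_criticalExponent {N : ℕ} {r : ℝ} (hN : 3 ≤ N) (hr : 1 ≤ r) :
    1 < criticalExponent N r := by
  have hN2 : (0 : ℝ) < N - 2 := by
    have : (3 : ℝ) ≤ N := by exact_mod_cast hN
    linarith
  have hθ : (2 * r)⁻¹ ≤ 1 / 2 := by
    rw [mul_inv]
    linarith [inv_le_one_of_one_le₀ hr]
  calc (1 : ℝ) < N / (N - 2) := by rw [one_lt_div hN2]; linarith
    _ = sobolevExponent N * (1 / 2) := by rw [sobolevExponent]; ring
    _ ≤ criticalExponent N r :=
        mul_le_mul_of_nonneg_left (by linarith) (sobolevExponent_pos hN).le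

lemma criticalExponent_pos {N : ℕ} {r : ℝ} (hN : 3 ≤ N) (hr : 1 ≤ r) : 0 < criticalExponent N r :=
  zero_lt_one.trans (one_lt_criticalExponent hN hr)

variable {K : G → ℝ} {r p q M A : ℝ}

lemma interactionEnergy_rpow_le_of_le {u : G → ℝ} (hK : IsInteractionKernel K r) (hq : 0 < q)
    (hp : q * (1 - (2 * r)⁻¹) ≤ p) (hu_nonneg : ∀ x, 0 ≤ u x) (huM : ∀ x, u x ≤ M)
    (hu : u.HasFiniteSupport) (hA : ∑' x, u x ^ q ≤ A) :
    interactionEnergy K (fun x => u x ^ p) ≤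
      (M ^ (p - q * (1 - (2 * r)⁻¹))) ^ 2 * (A * (∑' z, K z ^ r + A)) := by
  have hτ := one_sub_inv_two_mul_pos hK.one_le
  have h_supp := hasFiniteSupport_rpow hu hq.ne'
  have h_nonneg (x : G) : 0 ≤ u x ^ q := Real.rpow_nonneg (hu_nonneg x) q
  have hA_nonneg : 0 ≤ ∑' x, u x ^ q := tsum_nonneg h_nonneg
  have hκ : 0 ≤ ∑' z, K z ^ r := tsum_nonneg fun z => Real.rpow_nonneg (hK.nonneg z) r
  calc interactionEnergy K (fun x => u x ^ p)
      ≤ interactionEnergy K fun x =>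
          M ^ (p - q * (1 - (2 * r)⁻¹)) * (u x ^ q) ^ (1 - (2 * r)⁻¹) :=
        interactionEnergy_mono hK.nonneg (fun x => Real.rpow_nonneg (hu_nonneg x) p)
          (hasFiniteSupport_rpow hu ((mul_pos hq hτ).trans_le hp).ne')
          ((hasFiniteSupport_rpow h_supp hτ.ne').mul_right fun _ => M ^ (p - q * (1 - (2 * r)⁻¹)))
          fun x => rpow_le_rpow_sub_mul_rpow (hu_nonneg x) (huM x) (mul_pos hq hτ).le hp
    _ ≤ (M ^ (p - q * (1 - (2 * r)⁻¹))) ^ 2 *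
          ((∑' x, u x ^ q) * (∑' z, K z ^ r + ∑' x, u x ^ q)) := by
        rw [interactionEnergy_const_mul]
        gcongr
        exact interactionEnergy_rpow_le hK.one_le hK.nonneg hK.summable_rpow h_nonneg h_supp
    _ ≤ _ := by
        gcongr
        exact hA_nonneg.trans hA

namespace IsInteractionKernel

lemma tendsto_sqrt_sub_cofinite (hK : IsInteractionKernel K r) (x : G) :
    Tendsto (fun y => √(K (x - y))) cofinite (𝓝 0) := by
  have hr : 0 < r := zero_lt_one.trans_le hK.one_le
  have h_rpow := hK.summable_rpow.tendsto_cofinite_zero.rpow_const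
    (p := (r * 2)⁻¹) (Or.inr (by positivity))
  rw [Real.zero_rpow (by positivity)] at h_rpow
  refine (h_rpow.comp (sub_right_injective (b := x)).tendsto_cofinite).congr fun y => ?_
  rw [Function.comp_apply, ← Real.rpow_mul (hK.nonneg _), Real.sqrt_eq_rpow]
  congr 1
  field_simp

lemma sum_rpow_sub_le (hK : IsInteractionKernel K r) (x : G) (s : Finset G) :
    ∑ y ∈ s, K (x - y) ^ r ≤ ∑' z, K z ^ r := by
  have h_shift := (Equiv.subLeft x).hasSum_iff.2 hK.summable_rpow.hasSum
  exact sum_le_hasSum s (fun y _ => Real.rpow_nonneg (hK.nonneg _) r) h_shift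

-- Splitting `K = √K √K` puts one factor `√K` into `c₀` and leaves `√K v ^ p` bounded in `ℓ¹`.
lemma tendsto_convolve_rpow (hK : IsInteractionKernel K r) (hq : 0 < q)
    (hp : q * (1 - (2 * r)⁻¹) ≤ p) {v : ℕ → G → ℝ} {u : G → ℝ} (hv_nonneg : ∀ n x, 0 ≤ v n x)
    (hvM : ∀ n x, v n x ≤ M) (hA : ∀ n (s : Finset G), ∑ x ∈ s, v n x ^ q ≤ A)
    (h_lim : ∀ x, Tendsto (fun n => v n x) atTop (𝓝 (u x))) (x : G) :
    Tendsto (fun n => convolve K (fun y => v n y ^ p) x) atTop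
      (𝓝 (convolve K (fun y => u y ^ p) x)) := by
  have hqτ := mul_pos hq (one_sub_inv_two_mul_pos hK.one_le)
  have h_split (f : G → ℝ) :
      convolve K f x = ∑' y, √(K (x - y)) * (√(K (x - y)) * f y) :=
    tsum_congr fun y => by rw [← mul_assoc, Real.mul_self_sqrt (hK.nonneg _)]
  have hM : 0 ≤ M := (hv_nonneg 0 0).trans (hvM 0 0)
  have h_le (n : ℕ) (y : G) : |√(K (x - y)) * v n y ^ p| ≤
      M ^ (p - q * (1 - (2 * r)⁻¹)) * (K (x - y) ^ r + v n y ^ q) := by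
    rw [abs_of_nonneg (mul_nonneg (Real.sqrt_nonneg _) (Real.rpow_nonneg (hv_nonneg n y) p))]
    refine (mul_le_mul_of_nonneg_left (rpow_le_rpow_sub_mul_rpow (hv_nonneg n y) (hvM n y) hqτ.le
      hp) (Real.sqrt_nonneg _)).trans ?_
    rw [mul_left_comm]
    gcongr
    exact sqrt_mul_rpow_le (hK.nonneg _) (Real.rpow_nonneg (hv_nonneg n y) q) hK.one_le
  simp only [h_split]
  refine tendsto_tsum_mul_of_tendsto_cofinite (hK.tendsto_sqrt_sub_cofinite x)
    (B := M ^ (p - q * (1 - (2 * r)⁻¹)) * (∑' z, K z ^ r + A))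
    (fun y => ((h_lim y).rpow_const (Or.inr (hqτ.trans_le hp).le)).const_mul _) fun n s => ?_
  refine (Finset.sum_le_sum fun y _ => h_le n y).trans ?_
  rw [← Finset.mul_sum, Finset.sum_add_distrib]
  gcongr
  exacts [hK.sum_rpow_sub_le x s, hA n s]

end IsInteractionKernel

end Supercritical

section RieszKernel

variable {N : ℕ} {α r : ℝ}

/-- The Riesz kernel `|z|^(α - N)` on `ℤ^N`, with the value `0` at the origin. -/
def rieszKernel (N : ℕ) (α : ℝ) (z : Fin N → ℤ) : ℝ :=
  if z = 0 then 0 else zDist N z 0 ^ (α - (N : ℝ))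

lemma rieszKernel_nonneg (z : Fin N → ℤ) : 0 ≤ rieszKernel N α z := by
  unfold rieszKernel
  split_ifs
  exacts [le_rfl, Real.rpow_nonneg (Real.sqrt_nonneg _) _]

lemma convolve_rieszKernel (α : ℝ) (f : (Fin N → ℤ) → ℝ) (x : Fin N → ℤ) :
    convolve (rieszKernel N α) f x = rieszConv N α f x :=
  tsum_congr fun y => by simp [rieszKernel, zDist, sub_eq_zero, eq_comm, ite_mul]

lemma zDist_zero_eq_norm (z : Fin N → ℤ) :
    zDist N z 0 = ‖WithLp.toLp 2 fun i => (z i : ℝ)‖ := by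
  simp [zDist, EuclideanSpace.norm_eq]

lemma summable_zDist_zero_rpow {s : ℝ} (hs : s < -(N : ℝ)) :
    Summable fun z : Fin N → ℤ => zDist N z 0 ^ s := by
  obtain ⟨L, _, h_rank, h_mem⟩ : ∃ L : Submodule ℤ (EuclideanSpace ℝ (Fin N)),
      DiscreteTopology L ∧ Module.finrank ℤ L = N ∧
        ∀ z : Fin N → ℤ, WithLp.toLp 2 (fun i => (z i : ℝ)) ∈ L := by
    refine ⟨Submodule.span ℤ (Set.range (EuclideanSpace.basisFun (Fin N) ℝ).toBasis),
      inferInstance, by rw [ZLattice.rank ℝ, finrank_euclideanSpace_fin], fun z => ?_⟩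
    exact (Module.Basis.mem_span_iff_repr_mem ℤ _ _).2 fun i => ⟨z i, by simp⟩
  have h_inj : Function.Injective fun z : Fin N → ℤ => (⟨_, h_mem z⟩ : L) := fun z w hzw => by
    ext i
    simpa using congrArg (fun v : L => (v : EuclideanSpace ℝ (Fin N)) i) hzw
  have h_lattice := ZLattice.summable_norm_rpow L s (by rwa [h_rank])
  exact (h_lattice.comp_injective h_inj).congr fun z => by rw [zDist_zero_eq_norm]; rfl

lemma rieszKernel_rpow_le (hr : r ≠ 0) (z : Fin N → ℤ) :
    rieszKernel N α z ^ r ≤ zDist N z 0 ^ ((α - N) * r) := by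
  have h_nonneg : 0 ≤ zDist N z 0 := Real.sqrt_nonneg _
  unfold rieszKernel
  split_ifs
  · rw [Real.zero_rpow hr]
    positivity
  · rw [Real.rpow_mul h_nonneg]

lemma isInteractionKernel_rieszKernel (hN : 0 < N) (hr : 1 ≤ r) (h : (N : ℝ) < r * (N - α)) :
    IsInteractionKernel (rieszKernel N α) r where
  nonneg := rieszKernel_nonneg
  even z := by simp [rieszKernel, zDist]
  exists_pos := by
    refine ⟨Pi.single ⟨0, hN⟩ 1, ?_⟩
    rw [rieszKernel, if_neg (by simp), zDist_zero_eq_norm]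
    refine Real.rpow_pos_of_pos (norm_pos_iff.2 fun h_zero => ?_) _
    simpa using congrArg (fun v : EuclideanSpace ℝ (Fin N) => v ⟨0, hN⟩) h_zero
  one_le := hr
  summable_rpow := .of_nonneg_of_le (fun z => Real.rpow_nonneg (rieszKernel_nonneg z) r)
    (rieszKernel_rpow_le (by linarith)) (summable_zDist_zero_rpow (by linarith))

lemma exists_riesz_exponent {p : ℝ} (hN : 3 ≤ N) (hα : 0 < α) (hαN : α < N)
    (hp : ((N : ℝ) + α) / (N - 2) < p) :
    ∃ r : ℝ, 1 ≤ r ∧ (N : ℝ) < r * (N - α) ∧ criticalExponent N r < p := by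
  have hN' : (3 : ℝ) ≤ N := by exact_mod_cast hN
  have hN0 : (0 : ℝ) < N := by linarith
  have hN2 : (0 : ℝ) < N - 2 := by linarith
  obtain ⟨t, ht, htα⟩ : ∃ t, max 0 (2 - p * (N - 2) / N) < t ∧ t < 1 - α / N := by
    refine exists_between (max_lt ?_ ?_)
    · rwa [sub_pos, div_lt_one hN0]
    · have h_div : 1 + α / N < p * (N - 2) / N := by
        rw [div_lt_iff₀ hN2] at hp
        rw [lt_div_iff₀ hN0, add_mul, div_mul_cancel₀ _ hN0.ne']
        linarith
      linarith
  obtain ⟨ht0, htp⟩ := max_lt_iff.1 ht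
  have htN : t * N < N - α := by
    rwa [← lt_div_iff₀ hN0, sub_div, div_self hN0.ne']
  refine ⟨t⁻¹, (one_le_inv₀ ht0).2 ?_, ?_, ?_⟩
  · nlinarith
  · rwa [inv_mul_eq_div, lt_div_iff₀ ht0, mul_comm]
  · have htp' : (2 - t) * N < p * (N - 2) := by
      rw [← lt_div_iff₀ hN0]
      linarith
    rw [criticalExponent, sobolevExponent, mul_inv, inv_inv, div_mul_eq_mul_div, div_lt_iff₀ hN2]
    linarith

end RieszKernel

section Variational

variable {N : ℕ} {K : (Fin N → ℤ) → ℝ} {r p M : ℝ} {u v w : (Fin N → ℤ) → ℝ}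

/-- The nonlocal energy `∑ₓ u(x)^p (K ∗ u^p)(x)` of the Choquard equation. -/
def choquardEnergy (K : (Fin N → ℤ) → ℝ) (p : ℝ) (u : (Fin N → ℤ) → ℝ) : ℝ :=
  interactionEnergy K fun x => u x ^ p

/-- The competitors of the variational problem: nonnegative finitely supported functions of
Dirichlet energy one. -/
structure IsCompetitor (v : (Fin N → ℤ) → ℝ) : Prop where
  nonneg : ∀ x, 0 ≤ v x
  hasFiniteSupport : v.HasFiniteSupport
  dirichletEnergy_eq_one : dirichletEnergy v = 1

/-- The supremum of the Choquard energy over all competitors. -/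
def choquardSup (K : (Fin N → ℤ) → ℝ) (p : ℝ) : ℝ :=
  sSup (choquardEnergy K p '' {v | IsCompetitor v})

lemma choquardEnergy_const_mul {c : ℝ} (hc : 0 ≤ c) (hu : ∀ x, 0 ≤ u x) :
    choquardEnergy K p (fun x => c * u x) = (c ^ p) ^ 2 * choquardEnergy K p u := by
  simp only [choquardEnergy, Real.mul_rpow hc (hu _), interactionEnergy_const_mul]

lemma isCompetitor_inv_sqrt_mul (hu_nonneg : ∀ x, 0 ≤ u x) (hu : u.HasFiniteSupport)
    (hE : dirichletEnergy u ≠ 0) : IsCompetitor fun x => (√(dirichletEnergy u))⁻¹ * u x where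
  nonneg x := mul_nonneg (inv_nonneg.2 (Real.sqrt_nonneg _)) (hu_nonneg x)
  hasFiniteSupport := hu.mul_right fun _ => (√(dirichletEnergy u))⁻¹
  dirichletEnergy_eq_one := by
    rw [dirichletEnergy_const_mul, inv_pow, Real.sq_sqrt (dirichletEnergy_nonneg u),
      inv_mul_cancel₀ hE]

namespace IsCompetitor

lemma comp_add_right (hv : IsCompetitor v) (x₀ : Fin N → ℤ) :
    IsCompetitor fun x => v (x + x₀) where
  nonneg x := hv.nonneg _
  hasFiniteSupport := hv.hasFiniteSupport.comp_of_injective (add_left_injective x₀)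
  dirichletEnergy_eq_one := by rw [dirichletEnergy_comp_add_right, hv.dirichletEnergy_eq_one]

lemma tsum_rpow_le (hv : IsCompetitor v) (hN : 3 ≤ N) :
    ∑' x, v x ^ sobolevExponent N ≤ sobolevConst N := by
  simpa only [abs_of_nonneg (hv.nonneg _)] using tsum_abs_rpow_sobolevExponent_le_sobolevConst hN
    hv.hasFiniteSupport hv.dirichletEnergy_eq_one

lemma sum_rpow_le (hv : IsCompetitor v) (hN : 3 ≤ N) (s : Finset (Fin N → ℤ)) :
    ∑ x ∈ s, v x ^ sobolevExponent N ≤ sobolevConst N :=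
  ((summable_of_hasFiniteSupport (hasFiniteSupport_rpow hv.hasFiniteSupport
    (sobolevExponent_pos hN).ne')).sum_le_tsum s fun x _ => Real.rpow_nonneg (hv.nonneg x) _).trans
    (hv.tsum_rpow_le hN)

lemma le_sobolevConst_rpow (hv : IsCompetitor v) (hN : 3 ≤ N) (x : Fin N → ℤ) :
    v x ≤ sobolevConst N ^ (sobolevExponent N)⁻¹ := by
  have h_single : v x ^ sobolevExponent N ≤ sobolevConst N := by simpa using hv.sum_rpow_le hN {x}
  have h_nonneg := Real.rpow_nonneg (hv.nonneg x) (sobolevExponent N)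
  exact (Real.le_rpow_inv_iff_of_pos (hv.nonneg x) (h_nonneg.trans h_single)
    (sobolevExponent_pos hN)).2 h_single

lemma choquardEnergy_le (hv : IsCompetitor v) (hN : 3 ≤ N) (hK : IsInteractionKernel K r)
    (hp : criticalExponent N r ≤ p) (hM : ∀ x, v x ≤ M) :
    choquardEnergy K p v ≤ (M ^ (p - criticalExponent N r)) ^ 2 *
      (sobolevConst N * (∑' z, K z ^ r + sobolevConst N)) :=
  interactionEnergy_rpow_le_of_le hK (sobolevExponent_pos hN) hp hv.nonneg hM hv.hasFiniteSupport
    (hv.tsum_rpow_le hN)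

end IsCompetitor

lemma bddAbove_choquardEnergy (hN : 3 ≤ N) (hK : IsInteractionKernel K r)
    (hp : criticalExponent N r ≤ p) :
    BddAbove (choquardEnergy K p '' {v | IsCompetitor v}) :=
  ⟨_, Set.forall_mem_image.2 fun _ hv =>
    hv.choquardEnergy_le hN hK hp (hv.le_sobolevConst_rpow hN)⟩

lemma exists_isCompetitor_choquardEnergy_pos (hN : 3 ≤ N) (hK : IsInteractionKernel K r)
    (hp : 0 < p) : ∃ v, IsCompetitor v ∧ 0 < choquardEnergy K p v := by
  obtain ⟨z, hz⟩ := hK.exists_pos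
  let u : (Fin N → ℤ) → ℝ := Set.indicator {0, z} 1
  have hu_nonneg (x : Fin N → ℤ) : 0 ≤ u x := Set.indicator_nonneg (fun _ _ => zero_le_one) x
  have hu : u.HasFiniteSupport := (Set.toFinite {0, z}).subset Set.support_indicator_subset
  have hu0 : u 0 = 1 := by simp [u]
  have huz : u z = 1 := by simp [u]
  have hE : 0 < dirichletEnergy u := by
    refine (dirichletEnergy_nonneg u).lt_of_ne' fun h => ?_
    simp [(dirichletEnergy_eq_zero_iff hN hu).1 h] at hu0
  have h_energy : 0 < choquardEnergy K p u := by
    refine lt_of_lt_of_le ?_ (mul_mul_le_interactionEnergy hK.nonneg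
      (fun x => Real.rpow_nonneg (hu_nonneg x) p) (hasFiniteSupport_rpow hu hp.ne') z 0)
    simpa [hu0, huz] using hz
  refine ⟨_, isCompetitor_inv_sqrt_mul hu_nonneg hu hE.ne', ?_⟩
  rw [choquardEnergy_const_mul (by positivity) hu_nonneg]
  positivity

lemma choquardSup_pos (hN : 3 ≤ N) (hK : IsInteractionKernel K r)
    (hp : criticalExponent N r ≤ p) : 0 < choquardSup K p := by
  have hp_pos : 0 < p := (criticalExponent_pos hN hK.one_le).trans_le hp
  obtain ⟨v, hv, hv_pos⟩ := exists_isCompetitor_choquardEnergy_pos hN hK hp_pos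
  exact hv_pos.trans_le (le_csSup (bddAbove_choquardEnergy hN hK hp) (Set.mem_image_of_mem _ hv))

lemma choquardEnergy_le_choquardSup_mul_rpow (hN : 3 ≤ N) (hK : IsInteractionKernel K r)
    (hp : criticalExponent N r ≤ p) (hw_nonneg : ∀ x, 0 ≤ w x)
    (hw : w.HasFiniteSupport) :
    choquardEnergy K p w ≤ choquardSup K p * dirichletEnergy w ^ p := by
  have hp_pos : 0 < p := (criticalExponent_pos hN hK.one_le).trans_le hp
  rcases eq_or_ne (dirichletEnergy w) 0 with hE | hE
  · rw [hE, (dirichletEnergy_eq_zero_iff hN hw).1 hE]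
    simp [choquardEnergy, interactionEnergy, convolve, Real.zero_rpow hp_pos.ne']
  · have hE_pos := (dirichletEnergy_nonneg w).lt_of_ne' hE
    have h_sup := le_csSup (bddAbove_choquardEnergy hN hK hp)
      (Set.mem_image_of_mem _ (isCompetitor_inv_sqrt_mul hw_nonneg hw hE))
    have h_scale : (((√(dirichletEnergy w))⁻¹) ^ p) ^ 2 = (dirichletEnergy w ^ p)⁻¹ := by
      rw [Real.rpow_pow_comm (by positivity), inv_pow,
        Real.sq_sqrt hE_pos.le, Real.inv_rpow hE_pos.le]
    rwa [choquardEnergy_const_mul (by positivity) hw_nonneg, h_scale,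
      inv_mul_le_iff₀ (by positivity), mul_comm] at h_sup

lemma exists_forall_le_of_hasFiniteSupport {G : Type*} [Nonempty G] {f : G → ℝ}
    (hf_nonneg : ∀ x, 0 ≤ f x) (hf : f.HasFiniteSupport) : ∃ x₀, ∀ x, f x ≤ f x₀ := by
  classical
  obtain ⟨y⟩ := ‹Nonempty G›
  have h_fin : f.support.Finite := hf
  obtain ⟨x₀, -, hx₀⟩ := (insert y h_fin.toFinset).exists_max_image f ⟨y, by simp⟩
  refine ⟨x₀, fun x => ?_⟩
  by_cases hx : f x = 0
  · exact hx ▸ hf_nonneg x₀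
  · exact hx₀ x (by simp [hx])

lemma exists_maximizing_seq (hN : 3 ≤ N) (hK : IsInteractionKernel K r)
    (hp : criticalExponent N r ≤ p) :
    ∃ v : ℕ → (Fin N → ℤ) → ℝ, (∀ n, IsCompetitor (v n)) ∧ (∀ n x, v n x ≤ v n 0) ∧
      Tendsto (fun n => choquardEnergy K p (v n)) atTop (𝓝 (choquardSup K p)) := by
  have hp_pos : 0 < p := (criticalExponent_pos hN hK.one_le).trans_le hp
  obtain ⟨v₀, hv₀, -⟩ := exists_isCompetitor_choquardEnergy_pos hN hK hp_pos
  obtain ⟨t, -, ht_lim, ht⟩ := exists_seq_tendsto_sSup (Set.Nonempty.image _ ⟨v₀, hv₀⟩)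
    (bddAbove_choquardEnergy hN hK hp)
  choose v hv hvt using ht
  choose x₀ hx₀ using fun n => exists_forall_le_of_hasFiniteSupport (hv n).nonneg
    (hv n).hasFiniteSupport
  refine ⟨fun n x => v n (x + x₀ n), fun n => (hv n).comp_add_right (x₀ n), fun n x => ?_,
    ht_lim.congr fun n => ?_⟩
  · simpa only [zero_add] using hx₀ n (x + x₀ n)
  · rw [← hvt n]
    exact (interactionEnergy_comp_add_right K (fun x => v n x ^ p) (x₀ n)).symm

end Variational

section Limit

variable {N : ℕ} {K : (Fin N → ℤ) → ℝ} {r p : ℝ} {u v : (Fin N → ℤ) → ℝ}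

/-- For `u` of Dirichlet energy `E(u) = 1`, the difference `S E(w)^p - I(w)`, where `I` is the
Choquard energy and `w` has the
value `s` at `x` and agrees with `u` elsewhere, up to an additive constant and a term quadratic in
`s^p - u(x)^p`. The formula makes sense for functions of infinite support. -/
def siteGap (K : (Fin N → ℤ) → ℝ) (p S : ℝ) (u : (Fin N → ℤ) → ℝ) (x : Fin N → ℤ) (s : ℝ) : ℝ :=
  S * (1 - 2 * (s - u x) * zLap N u x
    + (s - u x) ^ 2 * dirichletEnergy (Pi.single x 1 : (Fin N → ℤ) → ℝ)) ^ p
    - 2 * convolve K (fun y => u y ^ p) x * s ^ p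

lemma siteGap_self (K : (Fin N → ℤ) → ℝ) (p S : ℝ) (u : (Fin N → ℤ) → ℝ) (x : Fin N → ℤ) :
    siteGap K p S u x (u x) = S - 2 * convolve K (fun y => u y ^ p) x * u x ^ p := by
  simp [siteGap]

lemma IsCompetitor.choquardEnergy_le_siteGap (hv : IsCompetitor v) (hN : 3 ≤ N)
    (hK : IsInteractionKernel K r) (hp : criticalExponent N r ≤ p) (x : Fin N → ℤ) {s : ℝ}
    (hs : 0 ≤ s) :
    choquardEnergy K p v - 2 * convolve K (fun y => v y ^ p) x * v x ^ p ≤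
      siteGap K p (choquardSup K p) v x s := by
  have hp_pos : 0 < p := (criticalExponent_pos hN hK.one_le).trans_le hp
  have h_nonneg (y : Fin N → ℤ) : 0 ≤ Function.update v x s y := by
    rcases eq_or_ne y x with rfl | hy
    · simpa using hs
    · simpa [hy] using hv.nonneg y
  have h_supp : (Function.update v x s).HasFiniteSupport := by
    rw [update_eq_add_smul_single]
    exact hv.hasFiniteSupport.add ((Set.toFinite {x}).subset fun y hy => by
      by_contra h
      simp_all)
  have h_sup := choquardEnergy_le_choquardSup_mul_rpow hN hK hp h_nonneg h_supp
  rw [dirichletEnergy_update hv.hasFiniteSupport, hv.dirichletEnergy_eq_one] at h_sup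
  have h_update : (fun y => Function.update v x s y ^ p) =
      Function.update (fun y => v y ^ p) x (s ^ p) := by
    ext y
    exact Function.apply_update (fun _ t => t ^ p) v x s y
  rw [choquardEnergy, h_update, interactionEnergy_update hK.even
    (hasFiniteSupport_rpow hv.hasFiniteSupport hp_pos.ne')] at h_sup
  have h_quadratic := mul_nonneg (sq_nonneg (s ^ p - v x ^ p)) (hK.nonneg 0)
  rw [choquardEnergy, siteGap]
  linarith

variable {w : ℕ → (Fin N → ℤ) → ℝ}

lemma tendsto_zLap (h_lim : ∀ x, Tendsto (fun n => w n x) atTop (𝓝 (u x))) (x : Fin N → ℤ) :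
    Tendsto (fun n => zLap N (w n) x) atTop (𝓝 (zLap N u x)) :=
  tendsto_finsetSum _ fun _ _ => ((h_lim _).sub (h_lim x)).add ((h_lim _).sub (h_lim x))

lemma tendsto_zGradSq (h_lim : ∀ x, Tendsto (fun n => w n x) atTop (𝓝 (u x)))
    (x : Fin N → ℤ) : Tendsto (fun n => zGradSq N (w n) x) atTop (𝓝 (zGradSq N u x)) :=
  tendsto_finsetSum _ fun _ _ =>
    (((h_lim _).sub (h_lim x)).pow 2).add (((h_lim _).sub (h_lim x)).pow 2)

lemma zGradSq_nonneg (u : (Fin N → ℤ) → ℝ) (x : Fin N → ℤ) : 0 ≤ zGradSq N u x :=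
  Finset.sum_nonneg fun _ _ => add_nonneg (sq_nonneg _) (sq_nonneg _)

lemma zMemD12_of_tendsto (hN : 3 ≤ N) (hw : ∀ n, IsCompetitor (w n))
    (h_lim : ∀ x, Tendsto (fun n => w n x) atTop (𝓝 (u x))) : zMemD12 N u := by
  refine ⟨summable_of_tendsto_of_sum_le (B := sobolevConst N)
    (fun n x => Real.rpow_nonneg (abs_nonneg (w n x)) _)
    (fun x => (h_lim x).abs.rpow_const (Or.inr (sobolevExponent_pos hN).le)) fun n s => ?_,
    summable_of_tendsto_of_sum_le (B := 2 * 1) (fun n => zGradSq_nonneg (w n))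
      (tendsto_zGradSq h_lim) fun n s => ?_⟩
  · simp only [abs_of_nonneg ((hw n).nonneg _)]
    exact (hw n).sum_rpow_le hN s
  · simpa only [(hw n).dirichletEnergy_eq_one] using sum_zGradSq_le (hw n).hasFiniteSupport s

lemma tendsto_siteGap (hp : 0 ≤ p) (S : ℝ)
    (h_lim : ∀ x, Tendsto (fun n => w n x) atTop (𝓝 (u x))) {x : Fin N → ℤ}
    (h_conv : Tendsto (fun n => convolve K (fun y => w n y ^ p) x) atTop
      (𝓝 (convolve K (fun y => u y ^ p) x))) (s : ℝ) :
    Tendsto (fun n => siteGap K p S (w n) x s) atTop (𝓝 (siteGap K p S u x s)) := by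
  have h_sub := (h_lim x).const_sub s
  have h_energy := (((h_sub.const_mul 2).mul (tendsto_zLap h_lim x)).const_sub 1).add
    ((h_sub.pow 2).mul_const (dirichletEnergy (Pi.single x 1 : (Fin N → ℤ) → ℝ)))
  exact ((h_energy.rpow_const (Or.inr hp)).const_mul S).sub
    ((h_conv.const_mul 2).mul_const (s ^ p))

lemma isMinOn_siteGap_of_tendsto (hN : 3 ≤ N) (hK : IsInteractionKernel K r)
    (hp : criticalExponent N r ≤ p) (hw : ∀ n, IsCompetitor (w n))
    (hw_sup : Tendsto (fun n => choquardEnergy K p (w n)) atTop (𝓝 (choquardSup K p)))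
    (h_lim : ∀ x, Tendsto (fun n => w n x) atTop (𝓝 (u x))) (x : Fin N → ℤ) :
    IsMinOn (siteGap K p (choquardSup K p) u x) (Set.Ici 0) (u x) := by
  refine isMinOn_iff.2 fun s hs => ?_
  have hp_nonneg : 0 ≤ p := (criticalExponent_pos hN hK.one_le).le.trans hp
  have h_conv := hK.tendsto_convolve_rpow (sobolevExponent_pos hN) hp (fun n => (hw n).nonneg)
    (fun n => (hw n).le_sobolevConst_rpow hN) (fun n => (hw n).sum_rpow_le hN) h_lim x
  rw [siteGap_self]
  exact le_of_tendsto_of_tendsto'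
    (hw_sup.sub ((h_conv.const_mul 2).mul ((h_lim x).rpow_const (Or.inr hp_nonneg))))
    (tendsto_siteGap hp_nonneg _ h_lim h_conv s)
    fun n => (hw n).choquardEnergy_le_siteGap hN hK hp x hs

-- If `t = 0`, the energies would tend to zero, by `choquardEnergy_le` with `M = wₙ 0`.
lemma limit_apply_zero_pos (hN : 3 ≤ N) (hK : IsInteractionKernel K r)
    (hp : criticalExponent N r < p) (hw : ∀ n, IsCompetitor (w n)) (hw_max : ∀ n x, w n x ≤ w n 0)
    (hw_sup : Tendsto (fun n => choquardEnergy K p (w n)) atTop (𝓝 (choquardSup K p)))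
    {t : ℝ} (h_lim : Tendsto (fun n => w n 0) atTop (𝓝 t)) : 0 < t := by
  refine (ge_of_tendsto' h_lim fun n => (hw n).nonneg 0).lt_of_ne' fun ht => ?_
  have hp' : 0 < p - criticalExponent N r := sub_pos.2 hp
  have h_bound := ((h_lim.rpow_const (Or.inr hp'.le)).pow 2).mul_const
    (sobolevConst N * (∑' z, K z ^ r + sobolevConst N))
  have h_le := le_of_tendsto_of_tendsto' hw_sup h_bound fun n =>
    (hw n).choquardEnergy_le hN hK hp.le (hw_max n)
  rw [ht, Real.zero_rpow hp'.ne', zero_pow two_ne_zero, zero_mul] at h_le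
  exact h_le.not_gt (choquardSup_pos hN hK hp.le)

theorem exists_isMinOn_siteGap (hN : 3 ≤ N) (hK : IsInteractionKernel K r)
    (hp : criticalExponent N r < p) :
    ∃ u : (Fin N → ℤ) → ℝ, zMemD12 N u ∧ (∀ x, 0 ≤ u x) ∧ 0 < u 0 ∧
      ∀ x, IsMinOn (siteGap K p (choquardSup K p) u x) (Set.Ici 0) (u x) := by
  obtain ⟨v, hv, hv_max, hv_sup⟩ := exists_maximizing_seq hN hK hp.le
  obtain ⟨u, -, φ, hφ, hu⟩ := (isCompact_univ_pi fun _ : Fin N → ℤ => isCompact_Icc).tendsto_subseq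
    fun n x _ => ⟨(hv n).nonneg x, (hv n).le_sobolevConst_rpow hN x⟩
  have h_lim := tendsto_pi_nhds.1 hu
  have h_sup := hv_sup.comp hφ.tendsto_atTop
  have hw (n : ℕ) := hv (φ n)
  exact ⟨u, zMemD12_of_tendsto hN hw h_lim,
    fun x => ge_of_tendsto' (h_lim x) fun n => (hw n).nonneg x,
    limit_apply_zero_pos hN hK hp hw (fun n => hv_max (φ n)) h_sup (h_lim 0),
    isMinOn_siteGap_of_tendsto hN hK hp.le hw h_sup h_lim⟩

end Limit

section EulerLagrange

lemma hasDerivAt_nonneg_of_isMinOn_Ici {g : ℝ → ℝ} {g' m : ℝ} (h_min : IsMinOn g (Set.Ici m) m)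
    (hg : HasDerivAt g g' m) : 0 ≤ g' := by
  have h_cone : (1 : ℝ) ∈ posTangentConeAt (Set.Ici m) m :=
    mem_posTangentConeAt_of_segment_subset fun s hs =>
      (segment_eq_Icc (le_add_of_nonneg_right (zero_le_one' ℝ)) ▸ hs).1
  simpa using h_min.localize.hasFDerivWithinAt_nonneg hg.hasDerivWithinAt.hasFDerivWithinAt h_cone

variable {N : ℕ} {K : (Fin N → ℤ) → ℝ} {p S : ℝ} {u : (Fin N → ℤ) → ℝ}

lemma hasDerivAt_siteGap (K : (Fin N → ℤ) → ℝ) (hp : 1 ≤ p) (S : ℝ) (u : (Fin N → ℤ) → ℝ)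
    (x : Fin N → ℤ) :
    HasDerivAt (siteGap K p S u x)
      (-(2 * p * (S * zLap N u x + convolve K (fun y => u y ^ p) x * u x ^ (p - 1)))) (u x) := by
  set d := dirichletEnergy (Pi.single x 1 : (Fin N → ℤ) → ℝ)
  have h_sub : HasDerivAt (fun s => s - u x) 1 (u x) := (hasDerivAt_id _).sub_const _
  have h_energy : HasDerivAt (fun s => 1 - 2 * (s - u x) * zLap N u x + (s - u x) ^ 2 * d)
      (-2 * zLap N u x) (u x) :=
    ((((h_sub.const_mul 2).mul_const _).const_sub 1).add ((h_sub.pow 2).mul_const d)).congr_deriv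
      (by simp)
  refine (((h_energy.rpow_const (p := p) (Or.inr hp)).const_mul S).sub
    ((Real.hasDerivAt_rpow_const (p := p) (Or.inr hp)).const_mul
      (2 * convolve K (fun y => u y ^ p) x))).congr_deriv ?_
  simp only [sub_self, mul_zero, zero_mul, sub_zero, zero_pow two_ne_zero, add_zero, Real.one_rpow]
  ring

lemma mul_zLap_add_nonpos_of_isMinOn_siteGap (hp : 1 ≤ p) {x : Fin N → ℤ} (hx : 0 ≤ u x)
    (h_min : IsMinOn (siteGap K p S u x) (Set.Ici 0) (u x)) :
    S * zLap N u x + convolve K (fun y => u y ^ p) x * u x ^ (p - 1) ≤ 0 := by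
  have h_deriv := hasDerivAt_nonneg_of_isMinOn_Ici (h_min.on_subset (Set.Ici_subset_Ici.2 hx))
    (hasDerivAt_siteGap K hp S u x)
  exact nonpos_of_mul_nonpos_right (neg_nonneg.1 h_deriv) (by linarith)

lemma mul_zLap_add_eq_zero_of_isMinOn_siteGap (hp : 1 ≤ p) {x : Fin N → ℤ} (hx : 0 < u x)
    (h_min : IsMinOn (siteGap K p S u x) (Set.Ici 0) (u x)) :
    S * zLap N u x + convolve K (fun y => u y ^ p) x * u x ^ (p - 1) = 0 := by
  have h_deriv := (h_min.isLocalMin (Ici_mem_nhds hx)).hasDerivAt_eq_zero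
    (hasDerivAt_siteGap K hp S u x)
  exact (mul_eq_zero.1 (neg_eq_zero.1 h_deriv)).resolve_left (by linarith)

lemma eq_apply_zero_of_periodic_single {ι β : Type*} [Finite ι] [DecidableEq ι]
    {f : (ι → ℤ) → β} (hf : ∀ i, Function.Periodic f (Pi.single i 1)) (x : ι → ℤ) :
    f x = f 0 := by
  have := Fintype.ofFinite ι
  have h_period : Function.Periodic f (∑ i, x i • Pi.single i 1) :=
    Finset.sum_induction _ (Function.Periodic f) (fun _ _ => Function.Periodic.add_period)
      (fun y => by rw [add_zero]) fun i _ => (hf i).zsmul (x i)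
  have h_sum : ∑ i, x i • (Pi.single i 1 : ι → ℤ) = x := by
    simp only [← Pi.single_smul, smul_eq_mul, mul_one, Finset.univ_sum_single]
  rw [← h_period 0, zero_add, h_sum]

lemma apply_add_single_eq_zero_of_zLap_nonpos (hu : ∀ x, 0 ≤ u x) {x : Fin N → ℤ}
    (hx : u x = 0) (h : zLap N u x ≤ 0) (i : Fin N) :
    u (x + Pi.single i 1) = 0 ∧ u (x - Pi.single i 1) = 0 := by
  simp only [zLap_eq_sum, hx, sub_zero] at h
  have h_nonneg (j : Fin N) : 0 ≤ u (x + Pi.single j 1) + u (x - Pi.single j 1) :=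
    add_nonneg (hu _) (hu _)
  have h_zero := (Finset.sum_eq_zero_iff_of_nonneg fun j _ => h_nonneg j).1
    (h.antisymm (Finset.sum_nonneg fun j _ => h_nonneg j)) i (Finset.mem_univ i)
  exact (add_eq_zero_iff_of_nonneg (hu _) (hu _)).1 h_zero

theorem pos_of_zLap_nonpos (hu : ∀ x, 0 ≤ u x) (h_lap : ∀ x, zLap N u x ≤ 0) (hu0 : 0 < u 0)
    (x : Fin N → ℤ) : 0 < u x := by
  have h_neighbor {x : Fin N → ℤ} (hx : u x = 0) :=
    apply_add_single_eq_zero_of_zLap_nonpos hu hx (h_lap x)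
  have h_periodic (i : Fin N) : Function.Periodic (fun y => u y = 0) (Pi.single i 1) := fun y =>
    propext ⟨fun hy => by simpa using (h_neighbor hy i).2, fun hy => (h_neighbor hy i).1⟩
  refine (hu x).lt_of_ne' fun hx => hu0.ne' ?_
  rwa [← eq_apply_zero_of_periodic_single h_periodic x]

end EulerLagrange

section Existence

variable {N : ℕ} {K : (Fin N → ℤ) → ℝ} {r p S : ℝ} {u : (Fin N → ℤ) → ℝ}

lemma zLap_const_mul (c : ℝ) (u : (Fin N → ℤ) → ℝ) (x : Fin N → ℤ) :
    zLap N (fun y => c * u y) x = c * zLap N u x := by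
  simp only [zLap, ← mul_sub, ← mul_add, Finset.mul_sum]

lemma zMemD12_const_mul (c : ℝ) (hu : zMemD12 N u) : zMemD12 N fun x => c * u x := by
  refine ⟨(hu.1.mul_left (|c| ^ (2 * (N : ℝ) / (N - 2)))).congr fun x => ?_,
    (hu.2.mul_left (c ^ 2)).congr fun x => ?_⟩
  · rw [abs_mul, Real.mul_rpow (abs_nonneg c) (abs_nonneg _)]
  · simp only [zGradSq, ← mul_sub, mul_pow, ← mul_add, Finset.mul_sum]

lemma zLap_add_convolve_const_mul_eq_zero {c : ℝ} (hc : 0 < c) (hcS : c ^ (2 * p - 2) * S = 1)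
    (hu : ∀ x, 0 ≤ u x) {x : Fin N → ℤ}
    (h : S * zLap N u x + convolve K (fun y => u y ^ p) x * u x ^ (p - 1) = 0) :
    zLap N (fun y => c * u y) x
      + convolve K (fun y => (c * u y) ^ p) x * (c * u x) ^ (p - 1) = 0 := by
  have h_pow : c * c ^ (2 * p - 2) = c ^ p * c ^ (p - 1) := by
    rw [← Real.rpow_add hc]
    nth_rewrite 1 [← Real.rpow_one c]
    rw [← Real.rpow_add hc]
    ring_nf
  simp only [Real.mul_rpow hc.le (hu _), convolve_const_mul, zLap_const_mul]
  linear_combination c * c ^ (2 * p - 2) * h - c * zLap N u x * hcS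
    - convolve K (fun y => u y ^ p) x * u x ^ (p - 1) * h_pow

theorem exists_positive_ground_state_lattice_general (hN : 3 ≤ N)
    (hK : IsInteractionKernel K r) (hp : criticalExponent N r < p) :
    ∃ u : (Fin N → ℤ) → ℝ, zMemD12 N u ∧ (∀ x, 0 < u x) ∧
      ∀ x, zLap N u x + convolve K (fun y => u y ^ p) x * u x ^ (p - 1) = 0 := by
  have hp_one : 1 < p := (one_lt_criticalExponent hN hK.one_le).trans hp
  have hS : 0 < choquardSup K p := choquardSup_pos hN hK hp.le
  obtain ⟨u, hu_mem, hu_nonneg, hu0, hu⟩ := exists_isMinOn_siteGap hN hK hp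
  have h_superharmonic (x : Fin N → ℤ) : zLap N u x ≤ 0 := by
    have h_site := mul_zLap_add_nonpos_of_isMinOn_siteGap hp_one.le (hu_nonneg x) (hu x)
    have h_nonlinear := mul_nonneg (convolve_nonneg hK.nonneg
      (fun y => Real.rpow_nonneg (hu_nonneg y) p) x) (Real.rpow_nonneg (hu_nonneg x) (p - 1))
    exact nonpos_of_mul_nonpos_right (by linarith) hS
  have hu_pos := pos_of_zLap_nonpos hu_nonneg h_superharmonic hu0
  set c := (choquardSup K p)⁻¹ ^ (2 * p - 2)⁻¹
  have hc : 0 < c := Real.rpow_pos_of_pos (inv_pos.2 hS) _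
  have hcS : c ^ (2 * p - 2) * choquardSup K p = 1 := by
    rw [Real.rpow_inv_rpow (inv_pos.2 hS).le (by linarith), inv_mul_cancel₀ hS.ne']
  exact ⟨fun x => c * u x, zMemD12_const_mul c hu_mem, fun x => mul_pos hc (hu_pos x), fun x =>
    zLap_add_convolve_const_mul_eq_zero hc hcS hu_nonneg
      (mul_zLap_add_eq_zero_of_isMinOn_siteGap hp_one.le (hu_pos x) (hu x))⟩

end Existence

theorem exists_positive_ground_state_lattice
    (N : ℕ) (hN : 3 ≤ N) (α : ℝ) (hα : 0 < α) (hαN : α < (N : ℝ))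
    (p : ℝ) (hp : ((N : ℝ) + α) / ((N : ℝ) - 2) < p) :
    ∃ u : (Fin N → ℤ) → ℝ, zMemD12 N u ∧ (∀ x, 0 < u x) ∧
      ∀ x, zLap N u x + rieszConv N α (fun y => u y ^ p) x * u x ^ (p - 1) = 0 := by
  obtain ⟨r, hr, hrα, hrp⟩ := exists_riesz_exponent hN hα hαN hp
  simpa only [convolve_rieszKernel] using exists_positive_ground_state_lattice_general hN
    (isInteractionKernel_rieszKernel (by linarith) hr hrα) hrp

end ChoquardZ
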